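/- Fix θ ∈ (0, π) and real numbers c, d, M, M̄, l, l̄, p, p̄, M₀, c₀, d₀, M̄₀, l₀, l₂, l̄₂, l₃, l̄₃. Let G⁻¹(r) denote a family of symmetric 3×3 matrices with entries satisfying, as r → ∞: (G⁻¹)₁₁ = 1 − 2M/r + (c²/2 + d²/2 + 4M² − M̄)/r² + O(1/r³), (G⁻¹)₂₂ = 1/r² − 2c/r³ + (2c² + 2d² + l²)/r⁴ + O(1/r⁵), (G⁻¹)₃₃ = csc²θ/r² + 2c·csc²θ/r³ + csc²θ·(2c² + 2d² + l̄²)/r⁴ + O(1/r⁵), (G⁻¹)₁₂ = l/r² − (2Ml + p)/r³ + O(1/r⁴), (G⁻¹)₁₃ = l̄ csc θ/r² − csc θ·(2Ml̄ + p̄)/r³ + O(1/r⁴), (G⁻¹)₂₃ = −2d csc θ/r³ + l·l̄·csc θ/r⁴ + O(1/r⁵); and let h(r) be a family of symmetric 3×3 matrices satisfying: h₁₁ = M₀/r + (2M − M·M₀ + c·c₀/2 + d·d₀/2 + l·l₀ + M̄₀/2)/r² + O(1/r³), h₂₂ = −r·c₀ + (−2M + M·c₀ − 2c·c₀ − 2d·d₀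 + l₂) + O(1/r), h₃₃ = (r·c₀ − 2M − M·c₀ − 2c·c₀ − 2d·d₀ + l·cot θ + l̄₃·csc θ) sin²θ + O(1/r), h₁₂ = (−M₂ − l + c₀·l + d₀·l̄)/r + O(1/r²), h₁₃ = (sin θ)(−M₃·csc θ − l̄ − c₀·l̄ + d₀·l)/r + O(1/r²), h₂₃ = (−r·d₀ + M·d₀ + (l̄₂ − l̄·cot θ + l₃·csc θ)/2) sin θ + O(1/r), where M₂, M₃ are further fixed reals. Then the trace Σ_{i,j} (G⁻¹)_{ij} h_{ij} satisfies, as r → ∞: Σ_{i,j} (G⁻¹)_{ij} h_{ij} = M₀/r + (−2M − 3M·M₀ + l₂ + l·cot θ + l̄₃·csc θ + c·c₀/2 + d·d₀/2 + l·l₀ + M̄₀/2)/r² + O(1/r³). -/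

import Mathlib

/-!
Only the two leading orders of each factor matter. Say that `f` has a two-term expansion of order
`m` if `f r = r ^ m * (a + b / r + O(r⁻²))` (`TwoTerm`). Such expansions add (`TwoTerm.add`) and
multiply like polynomials in `1 / r` truncated after the linear term (`TwoTerm.mul`).
Every product `(G⁻¹)ᵢⱼ hᵢⱼ` can be given order `-1` in this sense, so the trace has a two-term
expansion of order `-1`, whose remainder is `O(r⁻³)`. The coefficients add up as claimed: the
`c₀ / r` terms of the `22` and `33` products cancel; at order `r⁻²` these two products contribute
`2 c c₀` each, which cancels the `-2 c c₀` of `h₂₂` and of `h₃₃`; the two `23` products contribute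
`2 d d₀` each, which cancels the `-2 d d₀` there; and the `12` and `13` products are `O(r⁻³)`.
-/

open Real

/-- `f(r) = O(r^{-k})` at spatial infinity: there are `C, r₀ > 0` with
`|f r| ≤ C / r^k` for all `r ≥ r₀`. -/
def BigO (f : ℝ → ℝ) (k : ℕ) : Prop :=
  ∃ C r₀ : ℝ, 0 < C ∧ 0 < r₀ ∧ ∀ r : ℝ, r₀ ≤ r → |f r| ≤ C / r ^ k

open Asymptotics Filter in
/-- `f r = r ^ m * (a + b / r + O(r⁻²))` as `r → ∞`. The leading coefficient `a` may vanish, so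
that `m` is only an upper bound for the true order of `f`. -/
def TwoTerm (f : ℝ → ℝ) (m : ℤ) (a b : ℝ) : Prop :=
  (fun r : ℝ => f r - r ^ m * (a + b / r)) =O[atTop] (fun r : ℝ => r ^ m * (1 / r ^ 2))

open Asymptotics Filter in
/-- An expansion with remainder at least as good as `r ^ m * O(r⁻²)` and with possibly a further
term `e * r ^ (m - 2)`, which the remainder absorbs. -/
lemma TwoTerm.of_bigO {f F : ℝ → ℝ} {k : ℕ} (m : ℤ) (a b e : ℝ)
    (hf : BigO (fun r => f r - F r) k) (hk : 2 ≤ m + k)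
    (hF : ∀ r : ℝ, 0 < r → F r = r ^ m * (a + b / r + e / r ^ 2)) : TwoTerm f m a b := by
  obtain ⟨C, r₀, hC, hr₀, h⟩ := hf
  refine IsBigO.of_bound (C + |e|) ?_
  filter_upwards [eventually_ge_atTop r₀, eventually_ge_atTop 1] with r hr h1
  have hpos : 0 < r := by linarith
  have hpow : 1 / r ^ k ≤ r ^ m * (1 / r ^ 2) := by
    have h2 : r ^ (-(k : ℤ)) ≤ r ^ (m - 2) := zpow_le_zpow_right₀ h1 (by omega)
    rw [zpow_sub₀ hpos.ne', zpow_neg, zpow_natCast] at h2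
    have h3 : r ^ (2 : ℤ) = r ^ 2 := by norm_cast
    rw [h3] at h2
    simpa [div_eq_mul_inv] using h2
  have hp : 0 < r ^ m * (1 / r ^ 2) := by positivity
  rw [Real.norm_eq_abs, Real.norm_eq_abs, abs_of_pos hp]
  have hsplit : f r - r ^ m * (a + b / r) = (f r - F r) + e * (r ^ m * (1 / r ^ 2)) := by
    rw [hF r hpos]; ring
  calc |f r - r ^ m * (a + b / r)|
      ≤ |f r - F r| + |e * (r ^ m * (1 / r ^ 2))| := by rw [hsplit]; exact abs_add_le _ _
    _ ≤ C * (1 / r ^ k) + |e| * (r ^ m * (1 / r ^ 2)) := by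
        rw [abs_mul, abs_of_pos hp, mul_one_div C]
        exact add_le_add_left (h r hr) _
    _ ≤ C * (r ^ m * (1 / r ^ 2)) + |e| * (r ^ m * (1 / r ^ 2)) := by gcongr
    _ = (C + |e|) * (r ^ m * (1 / r ^ 2)) := by ring

lemma TwoTerm.add {f g : ℝ → ℝ} {m : ℤ} {a b a' b' : ℝ} (hf : TwoTerm f m a b)
    (hg : TwoTerm g m a' b') : TwoTerm (fun r => f r + g r) m (a + a') (b + b') :=
  (Asymptotics.IsBigO.add hf hg).congr_left fun r => by ring

open Asymptotics Filter in
lemma isBigO_const_add_div (a b : ℝ) :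
    (fun r : ℝ => a + b / r) =O[atTop] (fun _ : ℝ => (1 : ℝ)) := by
  have h : Tendsto (fun r : ℝ => a + b / r) atTop (nhds (a + 0)) :=
    tendsto_const_nhds.add (tendsto_const_nhds.div_atTop tendsto_id)
  exact h.isBigO_one ℝ

open Asymptotics Filter in
lemma TwoTerm.isBigO {f : ℝ → ℝ} {m : ℤ} {a b : ℝ} (hf : TwoTerm f m a b) :
    f =O[atTop] (fun r : ℝ => r ^ m) := by
  have h1 : (fun r : ℝ => r ^ m * (a + b / r)) =O[atTop] (fun r : ℝ => r ^ m) := by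
    simpa using (isBigO_refl (fun r : ℝ => r ^ m) atTop).mul (isBigO_const_add_div a b)
  have h2 : (fun r : ℝ => 1 / r ^ 2) =O[atTop] (fun _ : ℝ => (1 : ℝ)) := by
    have h : Tendsto (fun r : ℝ => 1 / r ^ 2) atTop (nhds 0) :=
      tendsto_const_nhds.div_atTop (tendsto_pow_atTop (by norm_num))
    exact h.isBigO_one ℝ
  have h3 : (fun r : ℝ => r ^ m * (1 / r ^ 2)) =O[atTop] (fun r : ℝ => r ^ m) := by
    simpa using (isBigO_refl (fun r : ℝ => r ^ m) atTop).mul h2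
  exact ((hf.trans h3).add h1).congr_left fun r => by ring

open Asymptotics Filter in
lemma TwoTerm.mul {f g : ℝ → ℝ} {m n : ℤ} {a b a' b' : ℝ} (hf : TwoTerm f m a b)
    (hg : TwoTerm g n a' b') :
    TwoTerm (fun r => f r * g r) (m + n) (a * a') (a * b' + b * a') := by
  have hA : (fun r : ℝ => r ^ m * (a + b / r)) =O[atTop] (fun r : ℝ => r ^ m) := by
    simpa using (isBigO_refl (fun r : ℝ => r ^ m) atTop).mul (isBigO_const_add_div a b)
  have h1 := IsBigO.mul hf hg.isBigO
  have h2 := hA.mul hg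
  have h3 : (fun r : ℝ => (b * b') * (r ^ m * r ^ n * (1 / r ^ 2))) =O[atTop]
      (fun r : ℝ => r ^ m * r ^ n * (1 / r ^ 2)) := isBigO_const_mul_self _ _ _
  have h1' := h1.congr_right (g₂ := fun r : ℝ => r ^ m * r ^ n * (1 / r ^ 2)) fun r => by ring
  have h2' := h2.congr_right (g₂ := fun r : ℝ => r ^ m * r ^ n * (1 / r ^ 2)) fun r => by ring
  -- With `A`, `B` the expansions of `f`, `g`:
  -- `f g = (f - A) g + A (g - B) + A B`, and `A B` exceeds its truncation by `b b' r ^ (m + n - 2)`.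
  refine ((h1'.add h2').add h3).congr' ?_ ?_
  · filter_upwards [eventually_gt_atTop 0] with r hr
    rw [zpow_add₀ hr.ne']
    ring
  · filter_upwards [eventually_gt_atTop 0] with r hr
    rw [zpow_add₀ hr.ne']

open Asymptotics Filter in
lemma TwoTerm.bigO_three {f : ℝ → ℝ} {a b : ℝ} (hf : TwoTerm f (-1) a b) :
    BigO (fun r => f r - (a / r + b / r ^ 2)) 3 := by
  obtain ⟨C, hC, h⟩ := IsBigO.exists_pos hf
  obtain ⟨r₀, h⟩ := eventually_atTop.1 h.bound
  refine ⟨C, max r₀ 1, hC, by positivity, fun r hr => ?_⟩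
  have hpos : 0 < r := lt_of_lt_of_le one_pos ((le_max_right _ _).trans hr)
  have h' := h r ((le_max_left _ _).trans hr)
  have hp : 0 < r ^ (-1 : ℤ) * (1 / r ^ 2) := by positivity
  rw [Real.norm_eq_abs, Real.norm_eq_abs, abs_of_pos hp, zpow_neg_one] at h'
  convert h' using 1
  · congr 1; ring
  · field_simp

/-- Asymptotic expansion of the trace `tr_g(h) = g^{ij} h_{ij}` on a slice
`{t = t₀}` of a Bondi radiating spacetime, where `Gi` plays the role of the inverse
metric `g^{ij}` and `h` the second fundamental form `h_{ij}`.  The subscripted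
constants `M₀, c₀, d₀, Mb₀, l₀` stand for the `u`-derivatives and
`M₂, M₃, l₂, l₃, lb₂, lb₃` for the angular derivatives. -/
theorem trace_h_expansion
    (θ c d M Mb l lb p pb M₀ c₀ d₀ Mb₀ l₀ l₂ lb₂ l₃ lb₃ M₂ M₃ : ℝ)
    (hθ : θ ∈ Set.Ioo 0 π)
    (Gi h : ℝ → Matrix (Fin 3) (Fin 3) ℝ)
    (hGisymm : ∀ r, (Gi r).IsSymm) (hhsymm : ∀ r, (h r).IsSymm)
    -- inverse metric expansion
    (hGi11 : BigO (fun r => Gi r 0 0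
      - (1 - 2 * M / r + (c ^ 2 / 2 + d ^ 2 / 2 + 4 * M ^ 2 - Mb) / r ^ 2)) 3)
    (hGi22 : BigO (fun r => Gi r 1 1
      - (1 / r ^ 2 - 2 * c / r ^ 3 + (2 * c ^ 2 + 2 * d ^ 2 + l ^ 2) / r ^ 4)) 5)
    (hGi33 : BigO (fun r => Gi r 2 2
      - ((sin θ)⁻¹ ^ 2 / r ^ 2 + 2 * c * (sin θ)⁻¹ ^ 2 / r ^ 3
        + (sin θ)⁻¹ ^ 2 * (2 * c ^ 2 + 2 * d ^ 2 + lb ^ 2) / r ^ 4)) 5)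
    (hGi12 : BigO (fun r => Gi r 0 1 - (l / r ^ 2 - (2 * M * l + p) / r ^ 3)) 4)
    (hGi13 : BigO (fun r => Gi r 0 2
      - (lb * (sin θ)⁻¹ / r ^ 2 - (sin θ)⁻¹ * (2 * M * lb + pb) / r ^ 3)) 4)
    (hGi23 : BigO (fun r => Gi r 1 2
      - (-(2 * d * (sin θ)⁻¹ / r ^ 3) + l * lb * (sin θ)⁻¹ / r ^ 4)) 5)
    -- second fundamental form expansion
    (hh11 : BigO (fun r => h r 0 0 - (M₀ / r
      + (2 * M - M * M₀ + c * c₀ / 2 + d * d₀ / 2 + l * l₀ + Mb₀ / 2) / r ^ 2)) 3)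
    (hh22 : BigO (fun r => h r 1 1 - (-(r * c₀)
      + (-(2 * M) + M * c₀ - 2 * c * c₀ - 2 * d * d₀ + l₂))) 1)
    (hh33 : BigO (fun r => h r 2 2 - ((r * c₀ - 2 * M - M * c₀ - 2 * c * c₀ - 2 * d * d₀
      + l * (cos θ / sin θ) + lb₃ * (sin θ)⁻¹) * sin θ ^ 2)) 1)
    (hh12 : BigO (fun r => h r 0 1 - ((-M₂ - l + c₀ * l + d₀ * lb) / r)) 2)
    (hh13 : BigO (fun r => h r 0 2
      - (sin θ * (-(M₃ * (sin θ)⁻¹) - lb - c₀ * lb + d₀ * l) / r)) 2)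
    (hh23 : BigO (fun r => h r 1 2 - ((-(r * d₀) + M * d₀
      + (lb₂ - lb * (cos θ / sin θ) + l₃ * (sin θ)⁻¹) / 2) * sin θ)) 1) :
    BigO (fun r => (∑ i : Fin 3, ∑ j : Fin 3, Gi r i j * h r i j)
      - (M₀ / r + (-(2 * M) - 3 * M * M₀ + l₂ + l * (cos θ / sin θ) + lb₃ * (sin θ)⁻¹
        + c * c₀ / 2 + d * d₀ / 2 + l * l₀ + Mb₀ / 2) / r ^ 2)) 3 := by
  have hs : sin θ ≠ 0 := (sin_pos_of_pos_of_lt_pi hθ.1 hθ.2).ne'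
  -- The orders `m` are chosen so that those of matching entries add up to `-1`; for the entries
  -- `12` and `13` this means a vanishing leading coefficient in both factors.
  have G11 := TwoTerm.of_bigO 0 1 (-(2 * M)) (c ^ 2 / 2 + d ^ 2 / 2 + 4 * M ^ 2 - Mb) hGi11
    (by norm_num) (by intro r hr; simp only [zpow_zero]; ring)
  have G22 := TwoTerm.of_bigO (-2) 1 (-(2 * c)) (2 * c ^ 2 + 2 * d ^ 2 + l ^ 2) hGi22 (by norm_num)
    (by intro r hr; simp only [zpow_neg, zpow_ofNat]; field_simp; ring)
  have G33 := TwoTerm.of_bigO (-2) ((sin θ)⁻¹ ^ 2) (2 * c * (sin θ)⁻¹ ^ 2)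
    ((sin θ)⁻¹ ^ 2 * (2 * c ^ 2 + 2 * d ^ 2 + lb ^ 2)) hGi33 (by norm_num)
    (by intro r hr; simp only [zpow_neg, zpow_ofNat]; field_simp)
  have G12 := TwoTerm.of_bigO (-1) 0 l (-(2 * M * l + p)) hGi12 (by norm_num)
    (by intro r hr; simp only [zpow_neg_one]; field_simp; ring)
  have G13 := TwoTerm.of_bigO (-1) 0 (lb * (sin θ)⁻¹) (-((sin θ)⁻¹ * (2 * M * lb + pb))) hGi13
    (by norm_num) (by intro r hr; simp only [zpow_neg_one]; field_simp; ring)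
  have G23 := TwoTerm.of_bigO (-2) 0 (-(2 * d * (sin θ)⁻¹)) (l * lb * (sin θ)⁻¹) hGi23
    (by norm_num) (by intro r hr; simp only [zpow_neg, zpow_ofNat]; field_simp; ring)
  have H11 := TwoTerm.of_bigO (-1) M₀
    (2 * M - M * M₀ + c * c₀ / 2 + d * d₀ / 2 + l * l₀ + Mb₀ / 2) 0 hh11 (by norm_num)
    (by intro r hr; simp only [zpow_neg_one]; ring)
  have H22 := TwoTerm.of_bigO 1 (-c₀) (-(2 * M) + M * c₀ - 2 * c * c₀ - 2 * d * d₀ + l₂) 0 hh22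
    (by norm_num) (by intro r hr; simp only [zpow_one]; field_simp; ring)
  have H33 := TwoTerm.of_bigO 1 (c₀ * sin θ ^ 2)
    ((-(2 * M) - M * c₀ - 2 * c * c₀ - 2 * d * d₀ + l * (cos θ / sin θ) + lb₃ * (sin θ)⁻¹)
      * sin θ ^ 2) 0 hh33
    (by norm_num) (by intro r hr; simp only [zpow_one]; field_simp; ring)
  have H12 := TwoTerm.of_bigO 0 0 (-M₂ - l + c₀ * l + d₀ * lb) 0 hh12 (by norm_num)
    (by intro r hr; simp only [zpow_zero]; ring)
  have H13 := TwoTerm.of_bigO 0 0 (sin θ * (-(M₃ * (sin θ)⁻¹) - lb - c₀ * lb + d₀ * l)) 0 hh13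
    (by norm_num) (by intro r hr; simp only [zpow_zero]; ring)
  have H23 := TwoTerm.of_bigO 1 (-d₀ * sin θ)
    ((M * d₀ + (lb₂ - lb * (cos θ / sin θ) + l₃ * (sin θ)⁻¹) / 2) * sin θ) 0 hh23
    (by norm_num) (by intro r hr; simp only [zpow_one]; field_simp; ring)
  have P11 := G11.mul H11
  have P22 := G22.mul H22
  have P33 := G33.mul H33
  have P12 := G12.mul H12
  have P13 := G13.mul H13
  have P23 := G23.mul H23
  norm_num only at P11 P22 P33 P12 P13 P23
  have key := (((((((P11.add P22).add P33).add P12).add P12).add P13).add P13).add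
    P23).add P23
  have fin := key.bigO_three
  convert fin using 2 with r
  have e10 : Gi r 1 0 = Gi r 0 1 := (hGisymm r).apply 0 1
  have e20 : Gi r 2 0 = Gi r 0 2 := (hGisymm r).apply 0 2
  have e21 : Gi r 2 1 = Gi r 1 2 := (hGisymm r).apply 1 2
  have f10 : h r 1 0 = h r 0 1 := (hhsymm r).apply 0 1
  have f20 : h r 2 0 = h r 0 2 := (hhsymm r).apply 0 2
  have f21 : h r 2 1 = h r 1 2 := (hhsymm r).apply 1 2
  simp only [Fin.sum_univ_three, e10, e20, e21, f10, f20, f21]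
  congr 1
  · ring
  · congr 2
    · field_simp
      ring
    · field_simp
      ring
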